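/- arXiv:1903.08072 — 3 statements merged into one kernel-verified Lean document; each statement's English description precedes it below -/
import Mathlib

section
/- For every nonempty compact set C ⊆ ℝ^I, every continuous function f : ℝ^I → ℝ, and every ε > 0, there exist a positive integer k, matrices W₁, W₂ : Fin k → (Fin I → ℝ), and vectors b₁, b₂ : Fin k → ℝ such that for all x ∈ C, |f(x) − ( (max over j ∈ Fin k of (∑ i, W₁ j i * x i + b₁ j)) − (max over j ∈ Fin k of (∑ i, W₂ j i * x i + b₂ j)) )| ≤ ε. In other words, a Max-plus model with two output units in its Max-plus block (whose classification score is the difference of the two output units) can approximate arbitrarily well any continuous function on a compact domain. -/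
/-!
By the lattice form of the Stone–Weierstrass theorem, a sublattice of `C(X, ℝ)`, with `X` compact,
is dense as soon as it interpolates arbitrary values at any two points. Differences of finite
maxima of affine functions do so, since affine functions alone already do, and they form a
sublattice because `(a - b) ⊔ (c - d) = ((a + d) ⊔ (c + b)) - (b + d)` and because a sum of two
finite maxima is the finite maximum of the pairwise sums.
-/

open Filter
open scoped Pointwise

section LatticeOrderedGroup

lemma supClosure_add_supClosure_subset {G : Type*} [Lattice G] [AddGroup G] [AddLeftMono G]
    [AddRightMono G] {s t : Set G} : supClosure s + supClosure t ⊆ supClosure (s + t) := by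
  have add_left_mem : ∀ a ∈ s, ∀ b ∈ supClosure t, a + b ∈ supClosure (s + t) := fun a ha ↦
    supClosure_min (t := {b | a + b ∈ supClosure (s + t)})
      (fun b hb ↦ subset_supClosure (Set.add_mem_add ha hb))
      fun b hb c hc ↦ by
        simpa only [Set.mem_ofPred_eq, add_sup] using supClosed_supClosure hb hc
  rintro _ ⟨a, ha, b, hb, rfl⟩
  refine supClosure_min (t := {a | a + b ∈ supClosure (s + t)})
    (fun a ha ↦ add_left_mem a ha b hb) (fun a ha c hc ↦ ?_) ha
  simpa only [Set.mem_ofPred_eq, sup_add] using supClosed_supClosure ha hc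

variable {G : Type*} [Lattice G] [AddCommGroup G] [AddLeftMono G] {s : Set G}

lemma supClosed_sub_self (hsup : SupClosed s) (hadd : s + s ⊆ s) : SupClosed (s - s) := by
  rintro _ ⟨a, ha, b, hb, rfl⟩ _ ⟨c, hc, d, hd, rfl⟩
  have add_mem {x y : G} (hx : x ∈ s) (hy : y ∈ s) : x + y ∈ s := hadd (Set.add_mem_add hx hy)
  refine ⟨(a + d) ⊔ (c + b), hsup (add_mem ha hd) (add_mem hc hb), b + d, add_mem hb hd, ?_⟩
  simp only [sup_sub]
  congr 1 <;> abel

lemma isSublattice_sub_self (hsup : SupClosed s) (hadd : s + s ⊆ s) : IsSublattice (s - s) where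
  supClosed := supClosed_sub_self hsup hadd
  infClosed a ha b hb := by
    have neg_mem {x : G} (hx : x ∈ s - s) : -x ∈ s - s := by
      rw [← neg_sub s s]
      exact Set.neg_mem_neg.mpr hx
    simpa only [neg_sup, neg_neg] using
      neg_mem (supClosed_sub_self hsup hadd (neg_mem ha) (neg_mem hb))

end LatticeOrderedGroup

section ContinuousFunctions

variable {X : Type*} [TopologicalSpace X]

lemma separatesPointsStrongly_of_one_mem {𝕜 : Type*} [Field 𝕜] [TopologicalSpace 𝕜]
    [IsTopologicalRing 𝕜] {A : Submodule 𝕜 C(X, 𝕜)} (one_mem : 1 ∈ A)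
    (sep : ∀ x y, x ≠ y → ∃ φ ∈ A, φ x ≠ φ y) : (A : Set C(X, 𝕜)).SeparatesPointsStrongly := by
  intro v x y
  rcases eq_or_ne x y with rfl | hxy
  · exact ⟨v x • 1, A.smul_mem _ one_mem, by simp, by simp⟩
  obtain ⟨φ, hφ, hne⟩ := sep x y hxy
  have hne' : φ y - φ x ≠ 0 := sub_ne_zero.mpr hne.symm
  set slope := (v y - v x) / (φ y - φ x) with hslope
  refine ⟨slope • φ + (v x - slope * φ x) • 1,
    A.add_mem (A.smul_mem _ hφ) (A.smul_mem _ one_mem), by simp, ?_⟩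
  calc (slope • φ + (v x - slope * φ x) • 1 : C(X, 𝕜)) y
      = slope * (φ y - φ x) + v x := by simp; ring
    _ = v y := by rw [hslope, div_mul_cancel₀ _ hne', sub_add_cancel]

theorem dense_supClosure_sub_supClosure [CompactSpace X] {A : Submodule ℝ C(X, ℝ)}
    (one_mem : 1 ∈ A) (sep : ∀ x y, x ≠ y → ∃ φ ∈ A, φ x ≠ φ y) :
    Dense (supClosure (A : Set C(X, ℝ)) - supClosure (A : Set C(X, ℝ))) := by
  set S := supClosure (A : Set C(X, ℝ))
  have add_subset : S + S ⊆ S := supClosure_add_supClosure_subset.trans <|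
    supClosure_mono <| Set.add_subset_iff.mpr fun _ ha _ hb ↦ A.add_mem ha hb
  have sublattice : IsSublattice (S - S) := isSublattice_sub_self supClosed_supClosure add_subset
  have subset_sub : (A : Set C(X, ℝ)) ⊆ S - S := fun φ hφ ↦
    ⟨φ, subset_supClosure hφ, 0, subset_supClosure A.zero_mem, sub_zero φ⟩
  refine dense_iff_closure_eq.mpr <| ContinuousMap.sublattice_closure_eq_top _
    ⟨1, subset_sub one_mem⟩ (fun _ hf _ hg ↦ sublattice.infClosed hf hg)
    (fun _ hf _ hg ↦ sublattice.supClosed hf hg) fun v x y ↦ ?_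
  obtain ⟨φ, hφ, hφxy⟩ := separatesPointsStrongly_of_one_mem one_mem sep v x y
  exact ⟨φ, subset_sub hφ, hφxy⟩

-- Repeating members of a finite family pads it to any larger size; this lets two maxima
-- be indexed by the same `Fin k`.
lemma eventually_exists_iSup_eq_of_mem_supClosure {s : Set C(X, ℝ)} {φ : C(X, ℝ)}
    (hφ : φ ∈ supClosure s) :
    ∀ᶠ k in atTop, ∃ ψ : Fin k → C(X, ℝ), (∀ j, ψ j ∈ s) ∧ ∀ x, φ x = ⨆ j, ψ j x := by
  obtain ⟨t, ht, hts, rfl⟩ := hφ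
  have : Nonempty t := ht.to_subtype
  filter_upwards [eventually_ge_atTop t.card] with k hk
  obtain ⟨e⟩ : Nonempty (t ↪ Fin k) := Function.Embedding.nonempty_of_card_le (by simpa using hk)
  have hsurj : (Function.invFun e).Surjective := Function.invFun_surjective e.injective
  refine ⟨fun j ↦ (Function.invFun e j : t), fun j ↦ hts (Function.invFun e j).2, fun x ↦ ?_⟩
  rw [ContinuousMap.sup'_apply, Finset.sup'_eq_csSup_image, sSup_image',
    hsurj.iSup_comp (g := fun ψ : t ↦ (ψ : C(X, ℝ)) x)]
  rfl

end ContinuousFunctions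

section ContinuousAffineMap

lemma continuousAffineMap_apply_eq_sum {R ι : Type*} [CommRing R] [TopologicalSpace R]
    [IsTopologicalAddGroup R] [Fintype ι] [DecidableEq ι] (a : (ι → R) →ᴬ[R] R) (x : ι → R) :
    a x = ∑ i, a.contLinear (Pi.single i 1) * x i + a 0 :=
  calc a x = a.contLinear x + a 0 := by simpa using a.map_vadd 0 x
    _ = a.contLinear (∑ i, x i • Pi.single i 1) + a 0 := by rw [← pi_eq_sum_univ' x]
    _ = ∑ i, a.contLinear (Pi.single i 1) * x i + a 0 := by simp [mul_comm]

variable {E : Type*} [AddCommGroup E] [Module ℝ E] [TopologicalSpace E]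

/-- The restrictions to `C` of continuous affine functions on the ambient space, as a subspace of
the continuous functions on `C`. -/
def affineRestrictions (C : Set E) : Submodule ℝ C(C, ℝ) where
  carrier := {φ | ∃ a : E →ᴬ[ℝ] ℝ, (a : C(E, ℝ)).restrict C = φ}
  zero_mem' := ⟨0, rfl⟩
  add_mem' := by
    rintro _ _ ⟨a, rfl⟩ ⟨b, rfl⟩
    exact ⟨a + b, rfl⟩
  smul_mem' := by
    rintro c _ ⟨a, rfl⟩
    exact ⟨c • a, rfl⟩

lemma dense_supClosure_affineRestrictions_sub [SeparatingDual ℝ E] {C : Set E} (hC : IsCompact C) :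
    Dense (supClosure (affineRestrictions C : Set C(C, ℝ)) -
      supClosure (affineRestrictions C : Set C(C, ℝ))) := by
  have : CompactSpace C := isCompact_iff_compactSpace.mp hC
  refine dense_supClosure_sub_supClosure ⟨ContinuousAffineMap.const ℝ E 1, rfl⟩ fun x y hxy ↦ ?_
  obtain ⟨ℓ, hℓ⟩ := SeparatingDual.exists_separating_of_ne (R := ℝ) (Subtype.coe_ne_coe.mpr hxy)
  exact ⟨_, ⟨ℓ.toContinuousAffineMap, rfl⟩, hℓ⟩

lemma eventually_exists_affine_iSup_eq {C : Set E} {φ : C(C, ℝ)}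
    (hφ : φ ∈ supClosure (affineRestrictions C : Set C(C, ℝ))) :
    ∀ᶠ k in atTop, ∃ a : Fin k → E →ᴬ[ℝ] ℝ, ∀ x : C, φ x = ⨆ j, a j x := by
  filter_upwards [eventually_exists_iSup_eq_of_mem_supClosure hφ] with k ⟨ψ, hψ, hsup⟩
  choose a ha using hψ
  exact ⟨a, fun x ↦ by simp only [hsup, ← ha]; rfl⟩

theorem maxplus_universal_approximation_general [SeparatingDual ℝ E] {C : Set E}
    (hC : IsCompact C) {f : E → ℝ} (hf : ContinuousOn f C) {ε : ℝ} (hε : 0 < ε) :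
    ∃ k, 0 < k ∧ ∃ a b : Fin k → E →ᴬ[ℝ] ℝ,
      ∀ x ∈ C, |f x - ((⨆ j, a j x) - ⨆ j, b j x)| ≤ ε := by
  have : CompactSpace C := isCompact_iff_compactSpace.mp hC
  let F : C(C, ℝ) := ⟨C.domRestrict f, hf.domRestrict⟩
  obtain ⟨_, ⟨g, hg, h, hh, rfl⟩, hdist⟩ :=
    (dense_supClosure_affineRestrictions_sub hC).exists_dist_lt F hε
  obtain ⟨k, ⟨⟨a, ha⟩, b, hb⟩, hk⟩ :=
    ((eventually_exists_affine_iSup_eq hg).and (eventually_exists_affine_iSup_eq hh)).and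
      (eventually_gt_atTop 0) |>.exists
  refine ⟨k, hk, a, b, fun x hx ↦ ?_⟩
  rw [← ha ⟨x, hx⟩, ← hb ⟨x, hx⟩]
  exact (ContinuousMap.dist_apply_le_dist (f := F) (g := g - h) ⟨x, hx⟩).trans hdist.le

end ContinuousAffineMap

/-- **Universal function approximator.**
A Max-plus model with two output units in its Max-plus block (whose scalar
output is the difference of the two output units, each a maximum of finitely
many affine functions of the input) can approximate arbitrarily well, in the
uniform norm, any continuous function on a nonempty compact set `C ⊆ ℝ^I`. -/
theorem maxplus_universal_approximation
    (I : ℕ) (C : Set (Fin I → ℝ)) (hC : IsCompact C) (hCne : C.Nonempty)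
    (f : (Fin I → ℝ) → ℝ) (hf : Continuous f) (ε : ℝ) (hε : 0 < ε) :
    ∃ (k : ℕ), 0 < k ∧
      ∃ (W₁ W₂ : Fin k → Fin I → ℝ) (b₁ b₂ : Fin k → ℝ),
        ∀ x ∈ C,
          |f x -
            ((⨆ j : Fin k, (∑ i, W₁ j i * x i + b₁ j)) -
             (⨆ j : Fin k, (∑ i, W₂ j i * x i + b₂ j)))| ≤ ε := by
  obtain ⟨k, hk, a, b, h⟩ := maxplus_universal_approximation_general hC hf.continuousOn hε
  refine ⟨k, hk, fun j i ↦ (a j).contLinear (Pi.single i 1),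
    fun j i ↦ (b j).contLinear (Pi.single i 1), fun j ↦ a j 0, fun j ↦ b j 0, fun x hx ↦ ?_⟩
  simpa only [← continuousAffineMap_apply_eq_sum] using h x hx
end

section
/- Fix positive integers I and k, matrices W₁, W₂ : Fin k → (Fin I → ℝ), and vectors b₁, b₂ : Fin k → ℝ. Define the fully-connected layer output y : Fin (2k) → ℝ by y_j = ∑_i W₁ j i * x_i for j in the first k coordinates and y_j = ∑_i W₂ (j−k) i * x_i for j in the last k coordinates, and define Max-plus weights w¹, w² : Fin (2k) → EReal by w¹_j = b₁ j for j in the first k coordinates and w¹_j = −∞ otherwise, and w²_j = b₂ (j−k) for j in the last k coordinates and w²_j = −∞ otherwise. Then for every x : Fin I → ℝ, the first Max-plus output z₁(x) = max over j ∈ Fin (2k) of ((y_j : EReal) + w¹_j) equals (max over j ∈ Fin k of (∑ i, W₁ j i * x i + b₁ j) : ℝ) coerced to EReal, and similarly z₂(x) = max over j ∈ Fin (2k) of ((y_j : EReal) + w²_j) equals (max over j ∈ Fin k of (∑ i, W₂ j i * x i + b₂ j) : ℝ) coerced to EReal. -/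
theorem coe_ciSup_eq_iSup_coe_ereal {ι : Sort*} [Nonempty ι] {f : ι → ℝ}
    (hf : BddAbove (Set.range f)) :
    ((⨆ i, f i : ℝ) : EReal) = ⨆ i, (f i : EReal) :=
  EReal.coe_strictMono.monotone.map_ciSup_of_continuousAt
    continuous_coe_real_ereal.continuousAt hf

/-- The output unit of a Max-plus layer with weights `w` applied to the hidden units `y`:
the tropical inner product of `y` and `w`. A weight `⊥` disconnects its hidden unit, since
addition on `EReal` has `a + ⊥ = ⊥` for every `a`, including `⊤`. -/
noncomputable def maxPlusUnit {ι : Type*} (w y : ι → EReal) : EReal :=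
  ⨆ j, y j + w j

section MaxPlusUnit

variable {ι κ : Type*} {e : κ → ι} {w : ι → EReal}

theorem maxPlusUnit_comp_of_eq_bot (hbot : ∀ j ∉ Set.range e, w j = ⊥) (y : ι → EReal) :
    maxPlusUnit (w ∘ e) (y ∘ e) = maxPlusUnit w y := by
  refine le_antisymm (iSup_comp_le (fun j => y j + w j) e) (iSup_le fun j => ?_)
  by_cases hj : j ∈ Set.range e
  · obtain ⟨i, rfl⟩ := hj
    exact le_iSup (fun i => y (e i) + w (e i)) i
  · rw [hbot j hj, EReal.add_bot]
    exact bot_le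

theorem maxPlusUnit_eq_coe_ciSup [Nonempty κ] {y : ι → ℝ} {b : κ → ℝ}
    (hw : ∀ i, w (e i) = b i) (hbot : ∀ j ∉ Set.range e, w j = ⊥)
    (hbdd : BddAbove (Set.range fun i => y (e i) + b i)) :
    maxPlusUnit w (fun j => y j) = ((⨆ i, (y (e i) + b i) : ℝ) : EReal) :=
  calc
    maxPlusUnit w (fun j => y j) = ⨆ i, ((y (e i) : EReal) + w (e i)) :=
      (maxPlusUnit_comp_of_eq_bot hbot _).symm
    _ = ⨆ i, ((y (e i) + b i : ℝ) : EReal) := by simp only [hw, EReal.coe_add]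
    _ = ((⨆ i, (y (e i) + b i) : ℝ) : EReal) := (coe_ciSup_eq_iSup_coe_ereal hbdd).symm

end MaxPlusUnit

/-- The construction in the proof of the universal approximation theorem:
a Max-plus block with `2k` hidden units and two output units, whose Max-plus
weight rows are `[b₁ᵀ, -∞, …, -∞]` and `[-∞, …, -∞, b₂ᵀ]`, computes in its two
output units exactly the two maxima of `k` affine functions each. -/
theorem maxplus_block_two_outputs
    (I k : ℕ) (hI : 0 < I) (hk : 0 < k)
    (W₁ W₂ : Fin k → Fin I → ℝ) (b₁ b₂ : Fin k → ℝ)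
    (y : (Fin I → ℝ) → Fin (2 * k) → ℝ)
    (hy : ∀ x : Fin I → ℝ, ∀ j : Fin (2 * k),
      y x j = if h : (j : ℕ) < k then ∑ i, W₁ ⟨j, h⟩ i * x i
              else ∑ i, W₂ ⟨(j : ℕ) - k, by omega⟩ i * x i)
    (w₁ w₂ : Fin (2 * k) → EReal)
    (hw₁ : ∀ j : Fin (2 * k),
      w₁ j = if h : (j : ℕ) < k then ((b₁ ⟨j, h⟩ : ℝ) : EReal) else ⊥)
    (hw₂ : ∀ j : Fin (2 * k),
      w₂ j = if h : (j : ℕ) < k then ⊥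
             else ((b₂ ⟨(j : ℕ) - k, by omega⟩ : ℝ) : EReal)) :
    ∀ x : Fin I → ℝ,
      (⨆ j : Fin (2 * k), ((y x j : EReal) + w₁ j)) =
        (((⨆ j : Fin k, (∑ i, W₁ j i * x i + b₁ j) : ℝ)) : EReal) ∧
      (⨆ j : Fin (2 * k), ((y x j : EReal) + w₂ j)) =
        (((⨆ j : Fin k, (∑ i, W₂ j i * x i + b₂ j) : ℝ)) : EReal) := by
  intro x
  have : Nonempty (Fin k) := ⟨⟨0, hk⟩⟩
  let first : Fin k → Fin (2 * k) := fun i => ⟨i, by omega⟩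
  let last : Fin k → Fin (2 * k) := fun i => ⟨k + i, by omega⟩
  have y_first (i : Fin k) : y x (first i) = ∑ l, W₁ i l * x l := by simp [hy, first]
  have y_last (i : Fin k) : y x (last i) = ∑ l, W₂ i l * x l := by simp [hy, last]
  have w₁_first (i : Fin k) : w₁ (first i) = b₁ i := by simp [hw₁, first]
  have w₂_last (i : Fin k) : w₂ (last i) = b₂ i := by simp [hw₂, last]
  have w₁_eq_bot : ∀ j ∉ Set.range first, w₁ j = ⊥ := fun j hj => by
    rw [hw₁, dif_neg fun h => hj ⟨⟨j, h⟩, rfl⟩]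
  have w₂_eq_bot : ∀ j ∉ Set.range last, w₂ j = ⊥ := fun j hj => by
    have hj_lt : (j : ℕ) < k := by
      by_contra! hkj
      exact hj ⟨⟨j - k, by omega⟩, Fin.ext (Nat.add_sub_of_le hkj)⟩
    rw [hw₂, dif_pos hj_lt]
  simp only [← y_first, ← y_last]
  exact ⟨maxPlusUnit_eq_coe_ciSup w₁_first w₁_eq_bot (Set.finite_range _).bddAbove,
    maxPlusUnit_eq_coe_ciSup w₂_last w₂_eq_bot (Set.finite_range _).bddAbove⟩
end

section
/- Let n be a positive integer, w : Fin n → ℝ a weight vector, and b : EReal a bias. Define the morphological perceptron a : (Fin n → EReal) → EReal by a(x) = max( b, max over i ∈ Fin n of (x_i + (w_i : EReal)) ). Then a is a dilation on the complete lattice (Fin n → EReal) with the pointwise (Pareto) order, in the sense that for every nonempty set S of vectors in (Fin n → EReal), a(sSup S) = ⨆ x ∈ S, a(x). -/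
/-!
Each coordinate projection preserves suprema because the order is pointwise, and each translation
`y ↦ y + c` of `EReal` preserves them too. Suprema commute with each other, hence
`x ↦ ⨆ i, x i + w i` preserves all suprema. Joining with the constant `b` keeps this for nonempty
suprema only, because the empty supremum `⊥` is sent to `b`.
-/

section CompleteLattice

variable {ι β : Type*} {α : ι → Type*} [∀ i, CompleteLattice (α i)] [CompleteLattice β]

theorem iSup_map_sSup_apply (f : ∀ i, sSupHom (α i) β) (S : Set (∀ i, α i)) :
    ⨆ i, f i (sSup S i) = ⨆ x ∈ S, ⨆ i, f i (x i) := by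
  simp only [sSup_apply, map_iSup]
  rw [iSup_comm, iSup_subtype']

theorem sup_iSup_map_sSup_apply (f : ∀ i, sSupHom (α i) β) (b : β) {S : Set (∀ i, α i)}
    (hS : S.Nonempty) :
    b ⊔ ⨆ i, f i (sSup S i) = ⨆ x ∈ S, b ⊔ ⨆ i, f i (x i) := by
  rw [iSup_map_sSup_apply, sup_biSup hS]

end CompleteLattice

theorem gc_add_coe_sub_coe (r : ℝ) :
    GaloisConnection (fun y : EReal ↦ y + r) (fun y : EReal ↦ y - r) := fun _ _ ↦
  (EReal.le_sub_iff_add_le (.inl (EReal.coe_ne_bot r)) (.inl (EReal.coe_ne_top r))).symm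

theorem ereal_iSup_add_top {ι : Sort*} (f : ι → EReal) : (⨆ i, f i) + ⊤ = ⨆ i, f i + ⊤ := by
  by_cases h : ∀ i, f i = ⊥
  · simp [h]
  · obtain ⟨i, hi⟩ := not_forall.mp h
    have sup_ne_bot : ⨆ i, f i ≠ ⊥ := fun h_bot ↦ hi (iSup_eq_bot.mp h_bot i)
    rw [EReal.add_top_of_ne_bot sup_ne_bot, eq_comm, eq_top_iff]
    exact (EReal.add_top_of_ne_bot hi).ge.trans (le_iSup (fun i ↦ f i + ⊤) i)

theorem ereal_iSup_add {ι : Sort*} (f : ι → EReal) (c : EReal) :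
    (⨆ i, f i) + c = ⨆ i, f i + c := by
  induction c with
  | bot => simp
  | coe r => exact (gc_add_coe_sub_coe r).l_iSup
  | top => exact ereal_iSup_add_top f

/-- The translation `y ↦ y + c` of `EReal`, bundled as a dilation, for use as one coordinate of a
morphological perceptron. An infinite `c` is allowed because `⊥ + ⊤ = ⊥` in `EReal`, so that the
empty supremum `⊥` is fixed by every translation. -/
noncomputable def addRightSSupHom (c : EReal) : sSupHom EReal EReal where
  toFun y := y + c
  map_sSup' s := by rw [sSup_eq_iSup', ereal_iSup_add, sSup_image']

theorem morphological_perceptron_isDilation_general {ι : Type*} (w : ι → EReal) (b : EReal)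
    (a : (ι → EReal) → EReal) (ha : ∀ x : ι → EReal, a x = max b (⨆ i, (x i + w i))) :
    ∀ S : Set (ι → EReal), S.Nonempty → a (sSup S) = ⨆ x ∈ S, a x := by
  intro S hS
  simp only [ha]
  exact sup_iSup_map_sSup_apply (fun i ↦ addRightSSupHom (w i)) b hS

/-- The morphological perceptron `a(x) = max(b, max_i (x_i + w_i))` is a
dilation on the complete lattice `(Fin n → EReal)` with the pointwise (Pareto)
order: it commutes with suprema of nonempty sets. -/
theorem morphological_perceptron_isDilation
    (n : ℕ) (hn : 0 < n) (w : Fin n → ℝ) (b : EReal)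
    (a : (Fin n → EReal) → EReal)
    (ha : ∀ x : Fin n → EReal, a x = max b (⨆ i : Fin n, (x i + (w i : EReal)))) :
    ∀ S : Set (Fin n → EReal), S.Nonempty → a (sSup S) = ⨆ x ∈ S, a x :=
  morphological_perceptron_isDilation_general (fun i ↦ (w i : EReal)) b a ha
end
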